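/- Continuity of the minimal renormalized action: the function w_∞ : Ω → ℝ defined by w_∞(x) = inf_{φ ∈ D_0^{1,2}(1,+∞)} A_x(φ) is real-valued and continuous on Ω. -/

import Mathlib

open MeasureTheory Real Set Filter Topology
open scoped RealInnerProductSpace ENNReal

noncomputable section
namespace NBodyHJ

attribute [local instance] Classical.propDecidable

abbrev Conf (d N : ℕ) := Fin N → EuclideanSpace ℝ (Fin d)

variable {d N : ℕ}

/-- The mass inner product on the configuration space. -/
def minner (m : Fin N → ℝ) (x y : Conf d N) : ℝ := ∑ i, m i * ⟪x i, y i⟫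

/-- The mass norm on the configuration space. -/
def mnorm (m : Fin N → ℝ) (x : Conf d N) : ℝ := Real.sqrt (minner m x x)

/-- Membership in the zero-barycenter configuration space `X`. -/
def inX (m : Fin N → ℝ) (x : Conf d N) : Prop := ∑ i, m i • x i = 0

/-- Collision configurations. -/
def collision (x : Conf d N) : Prop := ∃ i j, i ≠ j ∧ x i = x j

/-- Membership in the collision-free zero-barycenter space `Ω`. -/
def inOmega (m : Fin N → ℝ) (x : Conf d N) : Prop := inX m x ∧ ¬ collision x

/-- The Newtonian potential (with junk value `0` for a colliding pair). -/
def U (m : Fin N → ℝ) (x : Conf d N) : ℝ :=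
  ∑ i : Fin N, ∑ j : Fin N, if i < j then m i * m j / ‖x i - x j‖ else 0

/-- The time interval `(t₀, T)`, where `T ∈ (t₀, +∞]` is extended-real. -/
def timeSet (t0 : ℝ) (T : EReal) : Set ℝ := {t : ℝ | t0 < t ∧ (t : EReal) < T}

/-- Membership of the pair (curve, derivative) `(φ, φ')` in `D₀^{1,2}(t₀, T)`:
`φ` starts at `0`, takes values in `X`, is the integral of `φ'` (hence locally
absolutely continuous), and `φ'` has finite `L²` mass norm on `(t₀, T)`. -/
def InD (m : Fin N → ℝ) (t0 : ℝ) (T : EReal) (φ φ' : ℝ → Conf d N) : Prop :=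
  φ t0 = 0 ∧
  (∀ t : ℝ, t0 ≤ t → (t : EReal) < T → inX m (φ t)) ∧
  (∀ t : ℝ, t0 ≤ t → (t : EReal) < T → φ t = ∫ s in Set.Ioc t0 t, φ' s) ∧
  (∀ t : ℝ, t0 ≤ t → (t : EReal) < T → IntegrableOn φ' (Set.Ioc t0 t)) ∧
  IntegrableOn (fun t => (mnorm m (φ' t)) ^ 2) (timeSet t0 T)

/-- The norm `‖φ‖_{D_T}`. -/
def Dnorm (m : Fin N → ℝ) (t0 : ℝ) (T : EReal) (φ' : ℝ → Conf d N) : ℝ :=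
  Real.sqrt (∫ t in timeSet t0 T, (mnorm m (φ' t)) ^ 2)

/-- The motion `γ(t) = φ(t) + t a + x - a` associated with `φ` in the hyperbolic case. -/
def hypCurve (a x : Conf d N) (φ : ℝ → Conf d N) (t : ℝ) : Conf d N :=
  φ t + t • a + x - a

/-- The integrand of the hyperbolic renormalized Lagrangian action. -/
def hypIntegrand (m : Fin N → ℝ) (a x : Conf d N) (φ φ' : ℝ → Conf d N) (t : ℝ) : ℝ :=
  (mnorm m (φ' t)) ^ 2 / 2 + U m (hypCurve a x φ t) - U m (t • a)

/-- The hyperbolic renormalized Lagrangian action `A_{x,[1,T]}(φ)`, with values in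
`ℝ ∪ {+∞}` : it equals the integral of the renormalized Lagrangian if this integrand is
integrable and the motion is a.e. collision-free, and `+∞` otherwise. -/
def hypAction (m : Fin N → ℝ) (a x : Conf d N) (T : EReal) (φ φ' : ℝ → Conf d N) : EReal :=
  if IntegrableOn (hypIntegrand m a x φ φ') (timeSet 1 T) ∧
      (∀ᵐ t ∂volume.restrict (timeSet 1 T), ¬ collision (hypCurve a x φ t))
  then ((∫ t in timeSet 1 T, hypIntegrand m a x φ φ' t : ℝ) : EReal)
  else (⊤ : EReal)

/-- The infimum of the hyperbolic renormalized action over `D₀^{1,2}(1,T)`. -/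
def hypInf (m : Fin N → ℝ) (a x : Conf d N) (T : EReal) : EReal :=
  ⨅ (φ : ℝ → Conf d N) (φ' : ℝ → Conf d N) (_ : InD m 1 T φ φ'), hypAction m a x T φ φ'

/-- The renormalized value function `v(x)` in the hyperbolic case. -/
def hypValue (m : Fin N → ℝ) (a x : Conf d N) : ℝ :=
  (hypInf m a x ⊤).toReal - minner m a x

lemma timeSet_top (t0 : ℝ) : timeSet t0 ⊤ = Ioi t0 := by
  ext t
  simp [timeSet, EReal.coe_lt_top]

lemma mnorm_sq {m : Fin N → ℝ} (hm : ∀ i, 0 < m i) (x : Conf d N) :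
    mnorm m x ^ 2 = ∑ i, m i * ‖x i‖ ^ 2 := by
  have h : minner m x x = ∑ i, m i * ‖x i‖ ^ 2 := by
    simp [minner]
  rw [mnorm, Real.sq_sqrt, h]
  rw [h]
  exact Finset.sum_nonneg fun i _ => mul_nonneg (hm i).le (sq_nonneg _)

/-- The supremum norm is controlled by the mass norm. -/
lemma norm_sq_le_mnorm_sq {m : Fin N → ℝ} (hm : ∀ i, 0 < m i) (x : Conf d N) :
    ‖x‖ ^ 2 ≤ (∑ i, (m i)⁻¹) * mnorm m x ^ 2 := by
  have hS : 0 ≤ ∑ i, (m i)⁻¹ := Finset.sum_nonneg fun i _ => (inv_pos.2 (hm i)).le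
  have h0 : 0 ≤ (∑ i, (m i)⁻¹) * mnorm m x ^ 2 := mul_nonneg hS (sq_nonneg _)
  have key : ‖x‖ ≤ Real.sqrt ((∑ i, (m i)⁻¹) * mnorm m x ^ 2) := by
    refine (pi_norm_le_iff_of_nonneg (Real.sqrt_nonneg _)).2 fun i => ?_
    refine Real.le_sqrt_of_sq_le ?_
    have h1 : (m i)⁻¹ ≤ ∑ i, (m i)⁻¹ :=
      Finset.single_le_sum (f := fun i => (m i)⁻¹) (fun j _ => (inv_pos.2 (hm j)).le)
        (Finset.mem_univ i)
    have h2 : m i * ‖x i‖ ^ 2 ≤ mnorm m x ^ 2 := by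
      rw [mnorm_sq hm]
      exact Finset.single_le_sum (f := fun i => m i * ‖x i‖ ^ 2)
        (fun j _ => mul_nonneg (hm j).le (sq_nonneg _)) (Finset.mem_univ i)
    calc ‖x i‖ ^ 2 = (m i)⁻¹ * (m i * ‖x i‖ ^ 2) := by
          rw [← mul_assoc, inv_mul_cancel₀ (hm i).ne', one_mul]
      _ ≤ _ := mul_le_mul h1 h2 (mul_nonneg (hm i).le (sq_nonneg _)) hS
  calc ‖x‖ ^ 2 ≤ Real.sqrt ((∑ i, (m i)⁻¹) * mnorm m x ^ 2) ^ 2 := by gcongr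
    _ = _ := Real.sq_sqrt h0

lemma mnorm_sq_add_le {m : Fin N → ℝ} (hm : ∀ i, 0 < m i) (p u : Conf d N) :
    mnorm m (p + u) ^ 2 ≤
      mnorm m p ^ 2 + ‖u‖ * mnorm m p ^ 2 + (∑ i, m i) * (‖u‖ + ‖u‖ ^ 2) := by
  rw [mnorm_sq hm, mnorm_sq hm, Finset.mul_sum, Finset.sum_mul, ← Finset.sum_add_distrib,
    ← Finset.sum_add_distrib]
  refine Finset.sum_le_sum fun i _ => ?_
  have h1 : ‖(p + u) i‖ ≤ ‖p i‖ + ‖u‖ :=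
    (norm_add_le _ _).trans (by gcongr; exact norm_le_pi_norm u i)
  have h2 : ‖(p + u) i‖ ^ 2 ≤ (‖p i‖ + ‖u‖) ^ 2 := by gcongr
  have h3 : (‖p i‖ + ‖u‖) ^ 2 ≤ ‖p i‖ ^ 2 + ‖u‖ * ‖p i‖ ^ 2 + (‖u‖ + ‖u‖ ^ 2) := by
    nlinarith [mul_nonneg (norm_nonneg u) (sq_nonneg (‖p i‖ - 1))]
  nlinarith [mul_le_mul_of_nonneg_left (h2.trans h3) (hm i).le]

lemma norm_pair_sub_le (x y : Conf d N) (i j : Fin N) :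
    ‖(x i - x j) - (y i - y j)‖ ≤ 2 * ‖x - y‖ := by
  have h : (x i - x j) - (y i - y j) = (x - y) i - (x - y) j := by
    simp only [Pi.sub_apply]; abel
  rw [h]
  refine (norm_sub_le _ _).trans ?_
  linarith [norm_le_pi_norm (x - y) i, norm_le_pi_norm (x - y) j]

lemma measurable_U (m : Fin N → ℝ) : Measurable (U m : Conf d N → ℝ) := by
  unfold U
  refine Finset.measurable_sum _ fun i _ => Finset.measurable_sum _ fun j _ => ?_
  split_ifs
  · fun_prop
  · exact measurable_const

lemma continuous_mnorm_sq {m : Fin N → ℝ} (hm : ∀ i, 0 < m i) :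
    Continuous fun x : Conf d N => mnorm m x ^ 2 := by
  simp_rw [mnorm_sq hm]
  fun_prop

/-- The total weight of the pairs in the Newtonian potential. -/
def pairMass (m : Fin N → ℝ) : ℝ := ∑ i : Fin N, ∑ j : Fin N, if i < j then m i * m j else 0

lemma pairMass_nonneg {m : Fin N → ℝ} (hm : ∀ i, 0 < m i) : 0 ≤ pairMass m := by
  refine Finset.sum_nonneg fun i _ => Finset.sum_nonneg fun j _ => ?_
  split_ifs
  · exact (mul_pos (hm i) (hm j)).le
  · exact le_rfl

/-- Bounding the difference of each pair of terms bounds the difference of the potentials. -/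
lemma U_sub_U_le {m : Fin N → ℝ} (hm : ∀ i, 0 < m i) {x y : Conf d N} {c : ℝ}
    (h : ∀ i j, i ≠ j → ‖x i - x j‖⁻¹ - ‖y i - y j‖⁻¹ ≤ c) :
    U m x - U m y ≤ pairMass m * c := by
  unfold U pairMass
  rw [← Finset.sum_sub_distrib, Finset.sum_mul]
  refine Finset.sum_le_sum fun i _ => ?_
  rw [← Finset.sum_sub_distrib, Finset.sum_mul]
  refine Finset.sum_le_sum fun j _ => ?_
  split_ifs with hij
  · rw [div_eq_mul_inv, div_eq_mul_inv, ← mul_sub]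
    exact mul_le_mul_of_nonneg_left (h i j hij.ne) (mul_pos (hm i) (hm j)).le
  · simp

lemma inv_sub_inv_le_div_sq {p q : ℝ} (hp : 0 < p) (hq : 0 < q) :
    p⁻¹ - q⁻¹ ≤ (q - p) / p ^ 2 := by
  rw [← sub_nonneg]
  have : (q - p) / p ^ 2 - (p⁻¹ - q⁻¹) = (q - p) ^ 2 / (p ^ 2 * q) := by
    field_simp
  rw [this]
  positivity

lemma U_sub_U_le_of_separated {m : Fin N → ℝ} (hm : ∀ i, 0 < m i) {x y : Conf d N} {r : ℝ}
    (hr : 0 < r) (hx : ∀ i j, i ≠ j → r ≤ ‖x i - x j‖) (hy : ¬ collision y) :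
    U m x - U m y ≤ pairMass m * (2 * ‖x - y‖ / r ^ 2) := by
  refine U_sub_U_le hm fun i j hij => ?_
  have hp : 0 < ‖x i - x j‖ := hr.trans_le (hx i j hij)
  have hq : 0 < ‖y i - y j‖ :=
    norm_pos_iff.2 (sub_ne_zero.2 fun h => hy ⟨i, j, hij, h⟩)
  refine (inv_sub_inv_le_div_sq hp hq).trans ?_
  have h1 : ‖y i - y j‖ - ‖x i - x j‖ ≤ 2 * ‖x - y‖ := by
    rw [norm_sub_rev x y]
    exact (norm_sub_norm_le _ _).trans (norm_pair_sub_le y x i j)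
  have h2 := hx i j hij
  gcongr

lemma not_collision_of_separated {x : Conf d N} {r : ℝ} (hr : 0 < r)
    (hx : ∀ i j, i ≠ j → r ≤ ‖x i - x j‖) : ¬ collision x := by
  rintro ⟨i, j, hij, h⟩
  have := hx i j hij
  rw [h, sub_self, norm_zero] at this
  linarith

lemma exists_separation {x : Conf d N} (hx : ¬ collision x) :
    ∃ r > 0, ∀ i j, i ≠ j → r ≤ ‖x i - x j‖ := by
  have h : ∀ᶠ r in 𝓝[>] (0 : ℝ), ∀ i j, i ≠ j → r < ‖x i - x j‖ := by
    refine eventually_all.2 fun i => eventually_all.2 fun j => ?_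
    by_cases hij : i = j
    · simp [hij]
    · have hq : 0 < ‖x i - x j‖ :=
        norm_pos_iff.2 (sub_ne_zero.2 fun h => hx ⟨i, j, hij, h⟩)
      filter_upwards [nhdsWithin_le_nhds (Iio_mem_nhds hq)] with r hr _ using hr
  obtain ⟨r, hr, hr0⟩ := (h.and self_mem_nhdsWithin).exists
  exact ⟨r, hr0, fun i j hij => (hr i j hij).le⟩

lemma exists_separation_nhds {x : Conf d N} (hx : ¬ collision x) :
    ∃ r > 0, ∀ y : Conf d N, ‖y - x‖ ≤ r → ∀ i j, i ≠ j → r ≤ ‖y i - y j‖ := by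
  obtain ⟨r, hr, h⟩ := exists_separation hx
  refine ⟨r / 3, by positivity, fun y hy i j hij => ?_⟩
  have h1 := norm_pair_sub_le y x i j
  have h2 := norm_sub_norm_le (x i - x j) (y i - y j)
  rw [norm_sub_rev (x i - x j)] at h2
  linarith [h i j hij]

/-- The function that grows linearly from `0` to `1` on `[1, 1 + δ]` and is constant afterwards. -/
def ramp (δ t : ℝ) : ℝ := δ⁻¹ * min (t - 1) δ

lemma ramp_nonneg {δ t : ℝ} (hδ : 0 < δ) (ht : 1 ≤ t) : 0 ≤ ramp δ t :=
  mul_nonneg (inv_pos.2 hδ).le (le_min (by linarith) hδ.le)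

lemma ramp_le_one {δ : ℝ} (hδ : 0 < δ) (t : ℝ) : ramp δ t ≤ 1 := by
  unfold ramp
  rw [inv_mul_le_iff₀ hδ, mul_one]
  exact min_le_right _ _

lemma ramp_eq_one {δ t : ℝ} (hδ : 0 < δ) (ht : 1 + δ ≤ t) : ramp δ t = 1 := by
  unfold ramp
  rw [min_eq_right (by linarith), inv_mul_cancel₀ hδ.ne']

lemma ramp_pos {δ t : ℝ} (hδ : 0 < δ) (ht : 1 < t) : 0 < ramp δ t :=
  mul_pos (inv_pos.2 hδ) (lt_min (by linarith) hδ)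

lemma inX_add_smul {m : Fin N → ℝ} {x y : Conf d N} (hx : inX m x) (hy : inX m y) (c : ℝ) :
    inX m (x + c • y) := by
  unfold inX at *
  simp only [Pi.add_apply, Pi.smul_apply, smul_add, Finset.sum_add_distrib, hx, zero_add]
  simp_rw [smul_comm _ c]
  rw [← Finset.smul_sum, hy, smul_zero]

lemma inX_zero (m : Fin N → ℝ) : inX m (0 : Conf d N) := by
  simp [inX]

lemma InD.integrableOn_mnorm_sq {m : Fin N → ℝ} {φ φ' : ℝ → Conf d N} (h : InD m 1 ⊤ φ φ') :
    IntegrableOn (fun t => mnorm m (φ' t) ^ 2) (Ioi 1) := by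
  have := h.2.2.2.2
  rwa [timeSet_top] at this

lemma InD.continuousOn {m : Fin N → ℝ} {φ φ' : ℝ → Conf d N} (h : InD m 1 ⊤ φ φ') :
    ContinuousOn φ (Ici 1) := by
  intro t ht
  have ht' : (1 : ℝ) ≤ t := ht
  have h1 : IntegrableOn φ' (Icc 1 (t + 1)) := by
    rw [integrableOn_Icc_iff_integrableOn_Ioc]
    exact h.2.2.2.1 (t + 1) (by linarith) (EReal.coe_lt_top _)
  have h2 := intervalIntegral.continuousOn_primitive h1
  have h3 : ContinuousOn φ (Icc 1 (t + 1)) :=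
    h2.congr fun s hs => h.2.2.1 s hs.1 (EReal.coe_lt_top _)
  refine (h3 t ⟨ht, by linarith⟩).mono_of_mem_nhdsWithin ?_
  rw [← Ici_inter_Iic]
  exact inter_mem_nhdsWithin _ (Iic_mem_nhds (by linarith))

lemma InD.aestronglyMeasurable_deriv {m : Fin N → ℝ} {φ φ' : ℝ → Conf d N}
    (h : InD m 1 ⊤ φ φ') : AEStronglyMeasurable φ' (volume.restrict (Ioi 1)) := by
  have : Ioi (1 : ℝ) = ⋃ n : ℕ, Ioc 1 (1 + (n : ℝ)) := by
    ext t
    simp only [mem_Ioi, mem_iUnion, mem_Ioc, exists_and_left, iff_self_and]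
    intro _
    obtain ⟨n, hn⟩ := exists_nat_ge (t - 1)
    exact ⟨n, by linarith⟩
  rw [this, aestronglyMeasurable_iUnion_iff]
  intro n
  exact (h.2.2.2.1 (1 + n) (by simp) (EReal.coe_lt_top _)).aestronglyMeasurable

/-- The energy bound on a curve, in its form before optimizing the parameter `κ`. -/
lemma InD.norm_le {m : Fin N → ℝ} (hm : ∀ i, 0 < m i) {φ φ' : ℝ → Conf d N}
    (h : InD m 1 ⊤ φ φ') {t κ : ℝ} (ht : 1 ≤ t) (hκ : 0 < κ) :
    ‖φ t‖ ≤ κ / 2 * ((∑ i, (m i)⁻¹) * ∫ s in Ioi 1, mnorm m (φ' s) ^ 2) + (t - 1) / (2 * κ) := by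
  rw [h.2.2.1 t ht (EReal.coe_lt_top _)]
  have hi := h.integrableOn_mnorm_sq
  have hS : 0 ≤ ∑ i, (m i)⁻¹ := Finset.sum_nonneg fun i _ => (inv_pos.2 (hm i)).le
  have hi' : IntegrableOn (fun t => mnorm m (φ' t) ^ 2) (Ioc 1 t) :=
    hi.mono_set Ioc_subset_Ioi_self
  have hc : IntegrableOn (fun _ : ℝ => 1 / (2 * κ)) (Ioc 1 t) :=
    continuous_const.integrableOn_Ioc
  calc ‖∫ s in Ioc 1 t, φ' s‖ ≤ ∫ s in Ioc 1 t, ‖φ' s‖ := norm_integral_le_integral_norm _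
    _ ≤ ∫ s in Ioc 1 t, (κ / 2 * (∑ i, (m i)⁻¹) * mnorm m (φ' s) ^ 2 + 1 / (2 * κ)) := by
        refine integral_mono (h.2.2.2.1 t ht (EReal.coe_lt_top _)).norm
          ((hi'.const_mul _).add hc) fun s => ?_
        have h1 := norm_sq_le_mnorm_sq hm (φ' s)
        have h2 : ‖φ' s‖ ≤ κ / 2 * ‖φ' s‖ ^ 2 + 1 / (2 * κ) := by
          rw [← sub_nonneg]
          have : κ / 2 * ‖φ' s‖ ^ 2 + 1 / (2 * κ) - ‖φ' s‖
              = (κ * ‖φ' s‖ - 1) ^ 2 / (2 * κ) := by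
            field_simp
            ring
          rw [this]
          positivity
        have h3 := mul_le_mul_of_nonneg_left h1 (half_pos hκ).le
        simp only
        linarith
    _ = κ / 2 * (∑ i, (m i)⁻¹) * (∫ s in Ioc 1 t, mnorm m (φ' s) ^ 2) + (t - 1) / (2 * κ) := by
        rw [integral_add (hi'.const_mul _) hc, integral_const_mul, integral_const]
        simp only [measureReal_restrict_apply_univ, Real.volume_real_Ioc_of_le ht, smul_eq_mul]
        ring
    _ ≤ _ := by
        rw [← mul_assoc]
        gcongr
        · exact .of_forall fun s => sq_nonneg _
        · exact Ioc_subset_Ioi_self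

lemma InD.zero (m : Fin N → ℝ) : InD m 1 ⊤ (0 : ℝ → Conf d N) 0 := by
  refine ⟨rfl, fun t _ _ => inX_zero m, fun t _ _ => by simp, fun t _ _ => ?_, ?_⟩
  · exact integrableOn_zero
  · simp [mnorm, minner]

/-- Adding a ramp in a fixed direction, together with a bound on the new kinetic energy. -/
lemma InD.add_ramp {m : Fin N → ℝ} (hm : ∀ i, 0 < m i) {φ φ' : ℝ → Conf d N}
    (h : InD m 1 ⊤ φ φ') {u : Conf d N} (hu : inX m u) {δ : ℝ} (hδ : 0 < δ) :
    InD m 1 ⊤ (fun t => φ t + ramp δ t • u)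
      (fun t => φ' t + (Ioc 1 (1 + δ)).indicator (fun _ => δ⁻¹ • u) t) ∧
    ∫ t in Ioi 1, mnorm m (φ' t + (Ioc 1 (1 + δ)).indicator (fun _ => δ⁻¹ • u) t) ^ 2 ≤
      (1 + ‖u‖ / δ) * (∫ t in Ioi 1, mnorm m (φ' t) ^ 2) +
        (∑ i, m i) * (‖u‖ + ‖u‖ ^ 2 / δ) := by
  have hM : 0 ≤ ∑ i, m i := Finset.sum_nonneg fun i _ => (hm i).le
  have hind : ∀ s : Set ℝ, IntegrableOn
      ((Ioc 1 (1 + δ)).indicator (fun _ : ℝ => δ⁻¹ • u)) s volume := fun s =>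
    ((integrable_indicator_iff measurableSet_Ioc).2 (by simp)).integrableOn
  have hi := h.integrableOn_mnorm_sq
  set c : ℝ := (∑ i, m i) * (‖u‖ / δ + (‖u‖ / δ) ^ 2) with hc
  have hc0 : 0 ≤ c := by positivity
  have hbi : IntegrableOn (fun t => (1 + ‖u‖ / δ) * mnorm m (φ' t) ^ 2 +
      (Ioc 1 (1 + δ)).indicator (fun _ => c) t) (Ioi 1) :=
    (hi.const_mul _).add
      ((integrable_indicator_iff measurableSet_Ioc).2 (by simp)).integrableOn
  have hbound : ∀ t, mnorm m (φ' t + (Ioc 1 (1 + δ)).indicator (fun _ => δ⁻¹ • u) t) ^ 2 ≤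
      (1 + ‖u‖ / δ) * mnorm m (φ' t) ^ 2 + (Ioc 1 (1 + δ)).indicator (fun _ => c) t := by
    intro t
    by_cases ht : t ∈ Ioc 1 (1 + δ)
    · simp only [indicator_of_mem ht]
      have h1 := mnorm_sq_add_le hm (φ' t) (δ⁻¹ • u)
      have h2 : ‖δ⁻¹ • u‖ = ‖u‖ / δ := by
        rw [norm_smul, norm_inv, Real.norm_of_nonneg hδ.le, inv_mul_eq_div]
      rw [h2] at h1
      linarith
    · simp only [indicator_of_notMem ht, add_zero]
      have : 0 ≤ ‖u‖ / δ * mnorm m (φ' t) ^ 2 := by positivity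
      linarith
  have hint : IntegrableOn (fun t =>
      mnorm m (φ' t + (Ioc 1 (1 + δ)).indicator (fun _ => δ⁻¹ • u) t) ^ 2) (Ioi 1) := by
    refine Integrable.mono' hbi ?_ (.of_forall fun t => ?_)
    · exact (continuous_mnorm_sq hm).comp_aestronglyMeasurable
        (h.aestronglyMeasurable_deriv.add (hind _).aestronglyMeasurable)
    · rw [Real.norm_of_nonneg (sq_nonneg _)]
      exact hbound t
  refine ⟨⟨?_, ?_, ?_, ?_, ?_⟩, ?_⟩
  · simp [h.1, ramp, hδ.le]
  · intro t ht hT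
    exact inX_add_smul (h.2.1 t ht hT) hu _
  · intro t ht hT
    rw [integral_add (h.2.2.2.1 t ht hT) (hind _), ← h.2.2.1 t ht hT,
      setIntegral_indicator measurableSet_Ioc, setIntegral_const, Ioc_inter_Ioc, sup_idem, smul_smul,
      Real.volume_real_Ioc_of_le (le_inf ht (by linarith))]
    have hr : (t ⊓ (1 + δ) - 1) * δ⁻¹ = ramp δ t := by
      unfold ramp
      rw [mul_comm, ← min_sub_sub_right]
      simp
    rw [hr]
  · intro t ht hT
    exact (h.2.2.2.1 t ht hT).add (hind _)
  · rwa [timeSet_top]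
  · refine (integral_mono hint hbi hbound).trans (le_of_eq ?_)
    rw [integral_add (hi.const_mul _)
      ((integrable_indicator_iff measurableSet_Ioc).2 (by simp)).integrableOn, integral_const_mul,
      setIntegral_indicator measurableSet_Ioc, setIntegral_const,
      inter_eq_right.2 Ioc_subset_Ioi_self, Real.volume_real_Ioc_of_le (by linarith), hc,
      smul_eq_mul]
    congr 1
    field_simp
    ring

lemma hypAction_le_coe {m : Fin N → ℝ} {a x : Conf d N} {φ φ' : ℝ → Conf d N} {c : ℝ}
    (h : hypAction m a x ⊤ φ φ' ≤ c) :
    IntegrableOn (hypIntegrand m a x φ φ') (Ioi 1) ∧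
    (∀ᵐ t ∂volume.restrict (Ioi 1), ¬ collision (hypCurve a x φ t)) ∧
    ∫ t in Ioi 1, hypIntegrand m a x φ φ' t ≤ c := by
  unfold hypAction at h
  rw [timeSet_top] at h
  split_ifs at h with hc
  · exact ⟨hc.1, hc.2, EReal.coe_le_coe_iff.1 h⟩
  · exact absurd h (not_le.2 (EReal.coe_lt_top c))

lemma hypInf_le_coe {m : Fin N → ℝ} {a x : Conf d N} {φ φ' : ℝ → Conf d N} {c : ℝ}
    (hD : InD m 1 ⊤ φ φ') (hi : IntegrableOn (hypIntegrand m a x φ φ') (Ioi 1))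
    (hc : ∀ᵐ t ∂volume.restrict (Ioi 1), ¬ collision (hypCurve a x φ t))
    (h : ∫ t in Ioi 1, hypIntegrand m a x φ φ' t ≤ c) : hypInf m a x ⊤ ≤ c := by
  have h0 : hypInf m a x ⊤ ≤ hypAction m a x ⊤ φ φ' :=
    iInf_le_of_le φ <| iInf_le_of_le φ' <| iInf_le_of_le hD le_rfl
  refine h0.trans ?_
  unfold hypAction
  rw [timeSet_top, if_pos ⟨hi, hc⟩]
  exact EReal.coe_le_coe_iff.2 h

lemma exists_of_hypInf_lt {m : Fin N → ℝ} {a x : Conf d N} {c : ℝ}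
    (h : hypInf m a x ⊤ < c) :
    ∃ φ φ', InD m 1 ⊤ φ φ' ∧ hypAction m a x ⊤ φ φ' ≤ c := by
  unfold hypInf at h
  simp only [iInf_lt_iff] at h
  obtain ⟨φ, φ', hD, h⟩ := h
  exact ⟨φ, φ', hD, h.le⟩

lemma hypIntegrand_lower_bound {m : Fin N → ℝ} (hm : ∀ i, 0 < m i) {a x : Conf d N} {r : ℝ}
    (hr : 0 < r) (har : ∀ i j, i ≠ j → r ≤ ‖a i - a j‖) {φ φ' : ℝ → Conf d N} {t B : ℝ}
    (ht : 1 < t) (hc : ¬ collision (hypCurve a x φ t)) (hB : ‖φ t‖ + ‖x - a‖ ≤ B * √t) :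
    mnorm m (φ' t) ^ 2 / 2 - pairMass m * (2 / r ^ 2) * B * t ^ (-(3 / 2) : ℝ) ≤
      hypIntegrand m a x φ φ' t := by
  have ht0 : 0 < t := by linarith
  have h1 : ∀ i j, i ≠ j → t * r ≤ ‖(t • a) i - (t • a) j‖ := by
    intro i j hij
    rw [Pi.smul_apply, Pi.smul_apply, ← smul_sub, norm_smul, Real.norm_of_nonneg ht0.le]
    gcongr
    exact har i j hij
  have h2 := U_sub_U_le_of_separated hm (mul_pos ht0 hr) h1 hc
  have h3 : ‖t • a - hypCurve a x φ t‖ ≤ B * √t := by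
    refine le_trans ?_ hB
    have : t • a - hypCurve a x φ t = -(φ t + (x - a)) := by
      unfold hypCurve
      abel
    rw [this, norm_neg]
    exact norm_add_le _ _
  have h4 : t ^ (-(3 / 2) : ℝ) = √t / t ^ 2 := by
    rw [Real.sqrt_eq_rpow, ← Real.rpow_natCast t 2, ← Real.rpow_sub ht0]
    norm_num
  have h5 : pairMass m * (2 * ‖t • a - hypCurve a x φ t‖ / (t * r) ^ 2) ≤
      pairMass m * (2 / r ^ 2) * B * t ^ (-(3 / 2) : ℝ) := by
    calc _ ≤ pairMass m * (2 * (B * √t) / (t * r) ^ 2) := by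
          gcongr
          exact pairMass_nonneg hm
      _ = _ := by
          rw [h4]
          field_simp
  unfold hypIntegrand
  linarith

/-- Coercivity of the renormalized action, uniformly for bounded initial positions. -/
lemma exists_action_coercive {m : Fin N → ℝ} (hm : ∀ i, 0 < m i) {a : Conf d N}
    (ha : ¬ collision a) :
    ∃ C, 0 ≤ C ∧ ∀ (x : Conf d N) (φ φ' : ℝ → Conf d N), InD m 1 ⊤ φ φ' →
      IntegrableOn (hypIntegrand m a x φ φ') (Ioi 1) →
      (∀ᵐ t ∂volume.restrict (Ioi 1), ¬ collision (hypCurve a x φ t)) →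
      (∫ t in Ioi 1, mnorm m (φ' t) ^ 2) / 4 - C * (1 + ‖x - a‖) ≤
        ∫ t in Ioi 1, hypIntegrand m a x φ φ' t := by
  obtain ⟨r, hr, har⟩ := exists_separation ha
  have hS : 0 ≤ ∑ i, (m i)⁻¹ := Finset.sum_nonneg fun i _ => (inv_pos.2 (hm i)).le
  set S := ∑ i, (m i)⁻¹ with hSdef
  set P := pairMass m * (2 / r ^ 2) with hPdef
  have hP : 0 ≤ P := mul_nonneg (pairMass_nonneg hm) (by positivity)
  set κ : ℝ := 1 / (4 * (P * S + 1)) with hκdef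
  have hκ : 0 < κ := by positivity
  refine ⟨P / κ + 2 * P, by positivity, fun x φ φ' hD hi hc => ?_⟩
  set K := ∫ t in Ioi 1, mnorm m (φ' t) ^ 2 with hK
  have hK0 : 0 ≤ K := integral_nonneg fun t => sq_nonneg _
  set B := κ / 2 * (S * K) + 1 / (2 * κ) + ‖x - a‖ with hBdef
  have hBt : ∀ t, 1 < t → ‖φ t‖ + ‖x - a‖ ≤ B * √t := by
    intro t ht
    have hs : 1 ≤ √t := Real.one_le_sqrt.2 ht.le
    have hs0 : 0 < √t := by linarith
    have h1 := hD.norm_le hm ht.le (mul_pos hκ hs0)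
    rw [← hSdef, ← hK] at h1
    have h2 : (t - 1) / (2 * (κ * √t)) ≤ 1 / (2 * κ) * √t := by
      rw [div_le_iff₀ (by positivity)]
      have : 1 / (2 * κ) * √t * (2 * (κ * √t)) = √t * √t := by field_simp
      rw [this, Real.mul_self_sqrt (by linarith)]
      linarith
    have h3 : ‖x - a‖ ≤ ‖x - a‖ * √t := le_mul_of_one_le_right (norm_nonneg _) hs
    calc ‖φ t‖ + ‖x - a‖
        ≤ κ * √t / 2 * (S * K) + 1 / (2 * κ) * √t + ‖x - a‖ * √t := by linarith
      _ = B * √t := by rw [hBdef]; ring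
  have hg : IntegrableOn (fun t : ℝ => t ^ (-(3 / 2) : ℝ)) (Ioi 1) :=
    integrableOn_Ioi_rpow_of_lt (by norm_num) one_pos
  have hgi : ∫ t in Ioi (1 : ℝ), t ^ (-(3 / 2) : ℝ) = 2 := by
    rw [integral_Ioi_rpow_of_lt (by norm_num) one_pos]
    norm_num
  have hkin := hD.integrableOn_mnorm_sq
  have h1 : ∫ t in Ioi 1, (mnorm m (φ' t) ^ 2 / 2 - P * B * t ^ (-(3 / 2) : ℝ)) ≤
      ∫ t in Ioi 1, hypIntegrand m a x φ φ' t := by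
    refine integral_mono_ae ((hkin.div_const _).sub (hg.const_mul _)) hi ?_
    filter_upwards [hc, ae_restrict_mem measurableSet_Ioi] with t hct ht
    exact hypIntegrand_lower_bound hm hr har ht hct (hBt t ht)
  rw [integral_sub (hkin.div_const _) (hg.const_mul _), integral_const_mul, hgi,
    integral_div, ← hK] at h1
  refine le_trans ?_ h1
  have h2 : P * (κ * (S * K)) ≤ K / 4 := by
    have : P * (κ * (S * K)) = (P * S) / (P * S + 1) * (K / 4) := by
      rw [hκdef]
      field_simp
    rw [this]
    refine mul_le_of_le_one_left (by positivity) ?_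
    rw [div_le_one (by positivity)]
    linarith
  have h3 : 0 ≤ P / κ * ‖x - a‖ := by positivity
  have h4 : P * B * 2 = P * (κ * (S * K)) + P / κ + 2 * P * ‖x - a‖ := by
    rw [hBdef]
    field_simp
  nlinarith

lemma InD.aemeasurable_U {m : Fin N → ℝ} {a x : Conf d N} {φ φ' : ℝ → Conf d N}
    (h : InD m 1 ⊤ φ φ') :
    AEMeasurable (fun t => U m (hypCurve a x φ t)) (volume.restrict (Ioi 1)) := by
  refine (measurable_U m).comp_aemeasurable ?_
  have h1 : ContinuousOn (hypCurve a x φ) (Ioi 1) := by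
    unfold hypCurve
    exact (((h.continuousOn.mono Ioi_subset_Ici_self).add (by fun_prop)).add
      continuousOn_const).sub continuousOn_const
  exact h1.aemeasurable measurableSet_Ioi

lemma integrableOn_hypIntegrand_iff {m : Fin N → ℝ} {a x : Conf d N} {φ φ' : ℝ → Conf d N}
    (h : InD m 1 ⊤ φ φ') :
    IntegrableOn (hypIntegrand m a x φ φ') (Ioi 1) ↔
      IntegrableOn (fun t => U m (hypCurve a x φ t) - U m (t • a)) (Ioi 1) := by
  have hk := h.integrableOn_mnorm_sq.div_const 2
  constructor
  · intro hi
    refine (hi.sub hk).congr (.of_forall fun t => ?_)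
    simp only [Pi.sub_apply, hypIntegrand]
    ring
  · intro hi
    refine (hk.add hi).congr (.of_forall fun t => ?_)
    simp only [Pi.add_apply, hypIntegrand]
    ring

/-- The curve obtained by adding a ramp starts at a different point and rejoins the original
curve at time `1 + δ`. -/
lemma hypCurve_add_ramp (a y z : Conf d N) (φ : ℝ → Conf d N) (δ t : ℝ) :
    hypCurve a z (fun t => φ t + ramp δ t • (y - z)) t =
      hypCurve a y φ t + (1 - ramp δ t) • (z - y) := by
  unfold hypCurve
  module

lemma inX_sub {m : Fin N → ℝ} {x y : Conf d N} (hx : inX m x) (hy : inX m y) :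
    inX m (x - y) := by
  have := inX_add_smul hx hy (-1)
  rwa [neg_one_smul, ← sub_eq_add_neg] at this

/-- Changing the initial point of a curve that stays away from collisions on `[1, 1 + δ]`. -/
lemma hypInf_le_of_separated {m : Fin N → ℝ} (hm : ∀ i, 0 < m i) {a y z : Conf d N}
    (hy : inX m y) (hz : inX m z) {δ r : ℝ} (hδ : 0 < δ) (hr : 0 < r)
    {φ φ' : ℝ → Conf d N} (hD : InD m 1 ⊤ φ φ')
    (hsep : ∀ t, 1 < t → t ≤ 1 + δ → ∀ w : Conf d N, ‖w - hypCurve a y φ t‖ ≤ ‖y - z‖ →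
      ∀ i j, i ≠ j → r ≤ ‖w i - w j‖)
    (hi : IntegrableOn (hypIntegrand m a y φ φ') (Ioi 1))
    (hc : ∀ᵐ t ∂volume.restrict (Ioi 1), ¬ collision (hypCurve a y φ t)) :
    hypInf m a z ⊤ ≤ ((∫ t in Ioi 1, hypIntegrand m a y φ φ' t) +
      (‖y - z‖ / δ * (∫ t in Ioi 1, mnorm m (φ' t) ^ 2) +
        (∑ i, m i) * (‖y - z‖ + ‖y - z‖ ^ 2 / δ)) / 2 +
      δ * (pairMass m * (2 * ‖y - z‖ / r ^ 2)) : ℝ) := by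
  obtain ⟨hD', hkin⟩ := hD.add_ramp hm (inX_sub hy hz) hδ
  set ψ := fun t => φ t + ramp δ t • (y - z) with hψ
  set ψ' := fun t => φ' t + (Ioc 1 (1 + δ)).indicator (fun _ => δ⁻¹ • (y - z)) t with hψ'
  set b := pairMass m * (2 * ‖y - z‖ / r ^ 2) with hb
  have hb0 : 0 ≤ b := mul_nonneg (pairMass_nonneg hm) (by positivity)
  have hdist : ∀ t, 1 < t → ‖hypCurve a z ψ t - hypCurve a y φ t‖ ≤ ‖y - z‖ := by
    intro t ht
    rw [hypCurve_add_ramp, add_sub_cancel_left, norm_smul, norm_sub_rev z y,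
      Real.norm_of_nonneg (by linarith [ramp_le_one hδ t])]
    exact mul_le_of_le_one_left (norm_nonneg _) (by linarith [ramp_nonneg hδ ht.le])
  have heq : ∀ t, 1 + δ < t → hypCurve a z ψ t = hypCurve a y φ t := by
    intro t ht
    rw [hypCurve_add_ramp, ramp_eq_one hδ ht.le, sub_self, zero_smul, add_zero]
  have hU : ∀ t ∈ Ioi (1 : ℝ), |U m (hypCurve a z ψ t) - U m (hypCurve a y φ t)| ≤
      (Ioc 1 (1 + δ)).indicator (fun _ => b) t := by
    intro t ht
    by_cases ht' : t ≤ 1 + δ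
    · rw [indicator_of_mem (show t ∈ Ioc 1 (1 + δ) from ⟨ht, ht'⟩)]
      have hsz := hsep t ht ht' _ (hdist t ht)
      have hsy := hsep t ht ht' (hypCurve a y φ t) (by simp)
      have h1 := U_sub_U_le_of_separated hm hr hsz (not_collision_of_separated hr hsy)
      have h2 := U_sub_U_le_of_separated hm hr hsy (not_collision_of_separated hr hsz)
      rw [norm_sub_rev] at h2
      have h3 : pairMass m * (2 * ‖hypCurve a z ψ t - hypCurve a y φ t‖ / r ^ 2) ≤ b := by
        rw [hb]
        gcongr
        · exact pairMass_nonneg hm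
        · exact hdist t ht
      rw [abs_le]
      constructor <;> linarith
    · rw [heq t (not_le.1 ht'), sub_self, abs_zero]
      exact indicator_nonneg (fun _ _ => hb0) t
  have hbi : IntegrableOn ((Ioc 1 (1 + δ)).indicator (fun _ : ℝ => b)) (Ioi 1) :=
    ((integrable_indicator_iff measurableSet_Ioc).2 (by simp)).integrableOn
  have hUi : IntegrableOn (fun t => U m (hypCurve a z ψ t) - U m (hypCurve a y φ t)) (Ioi 1) := by
    refine Integrable.mono' hbi (hD'.aemeasurable_U.sub hD.aemeasurable_U).aestronglyMeasurable ?_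
    filter_upwards [ae_restrict_mem measurableSet_Ioi] with t ht using hU t ht
  have hUint : ∫ t in Ioi 1, (U m (hypCurve a z ψ t) - U m (hypCurve a y φ t)) ≤ δ * b := by
    have h1 : ∫ t in Ioi 1, (U m (hypCurve a z ψ t) - U m (hypCurve a y φ t)) ≤
        ∫ t in Ioi 1, (Ioc 1 (1 + δ)).indicator (fun _ : ℝ => b) t :=
      setIntegral_mono_on hUi hbi measurableSet_Ioi fun t ht => (le_abs_self _).trans (hU t ht)
    rw [setIntegral_indicator measurableSet_Ioc, setIntegral_const,
      inter_eq_right.2 Ioc_subset_Ioi_self, Real.volume_real_Ioc_of_le (by linarith),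
      smul_eq_mul] at h1
    linarith
  have hk := hD.integrableOn_mnorm_sq
  have hk' := hD'.integrableOn_mnorm_sq
  have hsplit : ∀ t, hypIntegrand m a z ψ ψ' t = hypIntegrand m a y φ φ' t +
      ((mnorm m (ψ' t) ^ 2 - mnorm m (φ' t) ^ 2) / 2 +
        (U m (hypCurve a z ψ t) - U m (hypCurve a y φ t))) := by
    intro t
    unfold hypIntegrand
    ring
  have hkd : IntegrableOn (fun t => (mnorm m (ψ' t) ^ 2 - mnorm m (φ' t) ^ 2) / 2) (Ioi 1) :=
    (hk'.sub hk).div_const 2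
  have hrest : IntegrableOn (fun t => (mnorm m (ψ' t) ^ 2 - mnorm m (φ' t) ^ 2) / 2 +
      (U m (hypCurve a z ψ t) - U m (hypCurve a y φ t))) (Ioi 1) := hkd.add hUi
  refine hypInf_le_coe hD' ((hi.add hrest).congr (.of_forall fun t => (hsplit t).symm)) ?_ ?_
  · filter_upwards [hc, ae_restrict_mem measurableSet_Ioi] with t hct ht
    by_cases ht' : t ≤ 1 + δ
    · exact not_collision_of_separated hr (hsep t ht ht' _ (hdist t ht))
    · rwa [heq t (not_le.1 ht')]
  · have h1 : ∫ t in Ioi 1, hypIntegrand m a z ψ ψ' t =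
        (∫ t in Ioi 1, hypIntegrand m a y φ φ' t) +
          (((∫ t in Ioi 1, mnorm m (ψ' t) ^ 2) - ∫ t in Ioi 1, mnorm m (φ' t) ^ 2) / 2 +
          ∫ t in Ioi 1, (U m (hypCurve a z ψ t) - U m (hypCurve a y φ t))) := by
      rw [← integral_sub hk' hk, ← integral_div, ← integral_add hkd hUi,
        ← integral_add hi hrest]
      exact integral_congr_ae (.of_forall hsplit)
    rw [h1]
    linarith

/-- Locally uniform transfer of near-optimal curves between initial points. -/
lemma exists_nhds_hypInf_le {m : Fin N → ℝ} (hm : ∀ i, 0 < m i) {a x : Conf d N}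
    (ha : ¬ collision a) (hx : ¬ collision x) (M : ℝ) {ε : ℝ} (hε : 0 < ε) :
    ∃ η > 0, ∀ y z : Conf d N, inX m y → inX m z → ‖y - x‖ < η → ‖z - x‖ < η →
      ∀ c : ℝ, c ≤ M → hypInf m a y ⊤ < c → hypInf m a z ⊤ ≤ (c + ε : ℝ) := by
  obtain ⟨C, hC, hcoer⟩ := exists_action_coercive hm ha
  obtain ⟨r, hr, hsep⟩ := exists_separation_nhds hx
  have hS : 0 ≤ ∑ i, (m i)⁻¹ := Finset.sum_nonneg fun i _ => (inv_pos.2 (hm i)).le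
  have hW : 0 ≤ ∑ i, m i := Finset.sum_nonneg fun i _ => (hm i).le
  have hP := pairMass_nonneg hm
  set S := ∑ i, (m i)⁻¹ with hSdef
  set W := ∑ i, m i with hWdef
  set R := 4 * (|M| + C * (2 + ‖x - a‖)) with hR
  have hR0 : 0 ≤ R := by positivity
  obtain ⟨κ, hκ, hκR⟩ : ∃ κ > 0, κ / 2 * (S * R) ≤ r / 4 := by
    refine ⟨r / (2 * (S * R + 1)), by positivity, ?_⟩
    have : r / (2 * (S * R + 1)) / 2 * (S * R) = (S * R) / (S * R + 1) * (r / 4) := by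
      field_simp
      ring
    rw [this]
    refine mul_le_of_le_one_left (by positivity) ?_
    rw [div_le_one (by positivity)]
    linarith
  obtain ⟨δ, hδ, hδr⟩ : ∃ δ > 0, δ / (2 * κ) + δ * ‖a‖ = r / 8 := by
    refine ⟨r / 8 / (1 / (2 * κ) + ‖a‖), by positivity, ?_⟩
    have : r / 8 / (1 / (2 * κ) + ‖a‖) * (1 / (2 * κ) + ‖a‖) = r / 8 :=
      div_mul_cancel₀ _ (by positivity)
    refine Eq.trans ?_ this
    ring
  set L := (R / δ + W * (1 + 1 / δ)) / 2 + δ * (pairMass m * (2 / r ^ 2)) with hL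
  have hL0 : 0 ≤ L := by positivity
  obtain ⟨η, hη0, hη1, hη2, hη3⟩ :
      ∃ η > 0, η ≤ 1 / 2 ∧ η ≤ r / 8 ∧ (L + 1) * (2 * η) ≤ ε := by
    refine ⟨min (min (1 / 2) (r / 8)) (ε / (2 * (L + 1))), by positivity,
      (min_le_left _ _).trans (min_le_left _ _), (min_le_left _ _).trans (min_le_right _ _), ?_⟩
    calc (L + 1) * (2 * min (min (1 / 2) (r / 8)) (ε / (2 * (L + 1))))
        ≤ (L + 1) * (2 * (ε / (2 * (L + 1)))) := by
          gcongr
          exact min_le_right _ _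
      _ = ε := by field_simp
  refine ⟨η, hη0, fun y z hy hz hyx hzx c hcM hlt => ?_⟩
  obtain ⟨φ, φ', hD, hle⟩ := exists_of_hypInf_lt hlt
  obtain ⟨hi, hc, hic⟩ := hypAction_le_coe hle
  have hco := hcoer y φ φ' hD hi hc
  have hyz : ‖y - z‖ ≤ 2 * η := by
    have : y - z = (y - x) - (z - x) := by abel
    rw [this]
    exact (norm_sub_le _ _).trans (by linarith)
  have hKR : ∫ t in Ioi 1, mnorm m (φ' t) ^ 2 ≤ R := by
    have h1 : ‖y - a‖ ≤ 1 + ‖x - a‖ := by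
      have : y - a = (y - x) + (x - a) := by abel
      rw [this]
      exact (norm_add_le _ _).trans (by linarith)
    have h2 : C * (1 + ‖y - a‖) ≤ C * (2 + ‖x - a‖) :=
      mul_le_mul_of_nonneg_left (by linarith) hC
    have h3 := le_abs_self M
    rw [hR]
    linarith
  have hclose : ∀ t, 1 < t → t ≤ 1 + δ → ‖hypCurve a y φ t - x‖ ≤ r / 2 := by
    intro t ht ht'
    have h1 := hD.norm_le hm ht.le hκ
    have h2 : κ / 2 * (S * ∫ s in Ioi 1, mnorm m (φ' s) ^ 2) ≤ κ / 2 * (S * R) := by gcongr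
    have h3 : (t - 1) / (2 * κ) ≤ δ / (2 * κ) := by
      gcongr
      linarith
    have h4 : ‖(t - 1) • a‖ ≤ δ * ‖a‖ := by
      rw [norm_smul, Real.norm_of_nonneg (by linarith)]
      gcongr
      linarith
    have h5 : hypCurve a y φ t - x = φ t + (t - 1) • a + (y - x) := by
      unfold hypCurve
      module
    rw [h5]
    have h6 := norm_add₃_le (a := φ t) (b := (t - 1) • a) (c := y - x)
    linarith
  refine (hypInf_le_of_separated hm hy hz hδ hr hD ?_ hi hc).trans ?_
  · intro t ht ht' w hw
    refine hsep w ?_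
    have : w - x = (w - hypCurve a y φ t) + (hypCurve a y φ t - x) := by abel
    rw [this]
    exact (norm_add_le _ _).trans (by linarith [hclose t ht ht'])
  · rw [EReal.coe_le_coe_iff]
    have hsq : ‖y - z‖ ^ 2 ≤ ‖y - z‖ := by
      nlinarith [norm_nonneg (y - z)]
    have h1 : (‖y - z‖ / δ * (∫ t in Ioi 1, mnorm m (φ' t) ^ 2) +
        W * (‖y - z‖ + ‖y - z‖ ^ 2 / δ)) / 2 +
        δ * (pairMass m * (2 * ‖y - z‖ / r ^ 2)) ≤
        (‖y - z‖ / δ * R + W * (‖y - z‖ + ‖y - z‖ / δ)) / 2 +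
        δ * (pairMass m * (2 * ‖y - z‖ / r ^ 2)) := by gcongr
    have h2 : (‖y - z‖ / δ * R + W * (‖y - z‖ + ‖y - z‖ / δ)) / 2 +
        δ * (pairMass m * (2 * ‖y - z‖ / r ^ 2)) = L * ‖y - z‖ := by
      rw [hL]
      ring
    have h3 : L * ‖y - z‖ ≤ ε := by
      have h4 : (L + 1) * ‖y - z‖ ≤ (L + 1) * (2 * η) := by gcongr
      linarith [norm_nonneg (y - z)]
    linarith

lemma exists_notMem_iUnion_span_singleton (hd : 2 ≤ d) {ι : Type*} [Finite ι]
    (b : ι → EuclideanSpace ℝ (Fin d)) :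
    ∃ w, ∀ k, w ∉ Submodule.span ℝ {b k} := by
  by_contra! hcon
  obtain ⟨k, hk⟩ := Subspace.exists_eq_top_of_iUnion_eq_univ
    (p := fun k => Submodule.span ℝ {b k}) (eq_univ_of_forall fun w => mem_iUnion.2 (hcon w))
  have h1 := finrank_span_le_card (R := ℝ) ({b k} : Set (EuclideanSpace ℝ (Fin d)))
  rw [hk, finrank_top, finrank_euclideanSpace_fin, toFinset_singleton,
    Finset.card_singleton] at h1
  omega

/-- A direction transversal to the relative positions of a given configuration. -/
lemma exists_transversal_direction (hd : 2 ≤ d) (hN : 2 ≤ N) {m : Fin N → ℝ}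
    (hm : ∀ i, 0 < m i) (a : Conf d N) :
    ∃ v, inX m v ∧ ∀ i j, i ≠ j → v i - v j ∉ Submodule.span ℝ {a i - a j} := by
  obtain ⟨w, hw⟩ := exists_notMem_iUnion_span_singleton hd
    (fun k : Fin N × Fin N => a k.1 - a k.2)
  have hM : 0 < ∑ i, m i :=
    Finset.sum_pos (fun i _ => hm i) ⟨⟨0, by omega⟩, Finset.mem_univ _⟩
  set e := (∑ i : Fin N, m i * (i : ℝ)) / ∑ i, m i with he
  refine ⟨fun i => ((i : ℝ) - e) • w, ?_, fun i j hij h => hw (i, j) ?_⟩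
  · unfold inX
    simp_rw [smul_smul, mul_sub]
    rw [← Finset.sum_smul, Finset.sum_sub_distrib, ← Finset.sum_mul, he, mul_div_cancel₀ _ hM.ne',
      sub_self, zero_smul]
  · simp only at h
    rw [← sub_smul] at h
    refine (Submodule.smul_mem_iff _ ?_).1 h
    intro h0
    apply hij
    ext
    have : (i : ℝ) = j := by linarith
    exact_mod_cast this

/-- A ramp in a small transversal direction makes the linear motion collision-free. -/
lemma exists_collision_free_ramp (hd : 2 ≤ d) (hN : 2 ≤ N) {m : Fin N → ℝ}
    (hm : ∀ i, 0 < m i) {a x : Conf d N} (hx : ¬ collision x) :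
    ∃ v, inX m v ∧ ∀ t, 1 ≤ t →
      ¬ collision (hypCurve a x (fun t => (0 : ℝ → Conf d N) t + ramp 1 t • v) t) := by
  obtain ⟨v, hv, hvt⟩ := exists_transversal_direction hd hN hm a
  have key : ∀ᶠ ε in 𝓝[>] (0 : ℝ), ∀ i j, i ≠ j → ∀ t, 1 ≤ t →
      (x i - x j) + (t - 1) • (a i - a j) + (ramp 1 t * ε) • (v i - v j) ≠ 0 := by
    refine eventually_all.2 fun i => eventually_all.2 fun j => ?_
    by_cases hij : i = j
    · simp [hij]
    by_cases hmem : x i - x j ∈ Submodule.span ℝ {a i - a j}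
    · filter_upwards [self_mem_nhdsWithin] with ε hε _ t ht h0
      have h1 : (ramp 1 t * ε) • (v i - v j) ∈ Submodule.span ℝ {a i - a j} := by
        rw [eq_neg_of_add_eq_zero_right h0]
        exact Submodule.neg_mem _ (Submodule.add_mem _ hmem
          (Submodule.smul_mem _ _ (Submodule.mem_span_singleton_self _)))
      rcases ht.eq_or_lt with rfl | ht
      · simp only [ramp, sub_self, zero_smul, add_zero, zero_le_one, inf_of_le_left, mul_zero,
          zero_mul] at h0
        exact hx ⟨i, j, hij, sub_eq_zero.1 h0⟩
      · exact hvt i j hij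
          ((Submodule.smul_mem_iff _ (mul_pos (ramp_pos one_pos ht) hε).ne').1 h1)
    · have hclosed : IsClosed (Submodule.span ℝ {a i - a j} : Set (EuclideanSpace ℝ (Fin d))) :=
        Submodule.closed_of_finiteDimensional _
      obtain ⟨r, hr, hball⟩ := Metric.isOpen_iff.1 hclosed.isOpen_compl _ hmem
      have hsmall : ∀ᶠ ε in 𝓝[>] (0 : ℝ), ε * ‖v i - v j‖ < r := by
        refine nhdsWithin_le_nhds ?_
        have : Tendsto (fun ε : ℝ => ε * ‖v i - v j‖) (𝓝 0) (𝓝 (0 * ‖v i - v j‖)) :=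
          tendsto_id.mul_const _
        rw [zero_mul] at this
        exact this.eventually (gt_mem_nhds hr)
      filter_upwards [self_mem_nhdsWithin, hsmall] with ε hε hεr _ t ht h0
      have hε' : 0 < ε := hε
      have hb : (x i - x j) + (ramp 1 t * ε) • (v i - v j) ∈ Metric.ball (x i - x j) r := by
        rw [mem_ball_iff_norm, add_sub_cancel_left, norm_smul,
          Real.norm_of_nonneg (mul_nonneg (ramp_nonneg one_pos ht) hε'.le)]
        refine lt_of_le_of_lt ?_ hεr
        gcongr
        exact mul_le_of_le_one_left hε'.le (ramp_le_one one_pos t)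
      refine hball hb ?_
      rw [add_right_comm] at h0
      rw [eq_neg_of_add_eq_zero_left h0]
      exact Submodule.neg_mem _ (Submodule.smul_mem _ _ (Submodule.mem_span_singleton_self _))
  obtain ⟨ε, hε⟩ := key.exists
  refine ⟨ε • v, ?_, ?_⟩
  · have := inX_add_smul (inX_zero m) hv ε
    rwa [zero_add] at this
  · rintro t ht ⟨i, j, hij, h⟩
    refine hε i j hij t ht ?_
    rw [← sub_eq_zero] at h
    rw [← h]
    simp only [hypCurve, Pi.zero_apply, Pi.add_apply, Pi.sub_apply, Pi.smul_apply, smul_smul]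
    module

lemma continuousOn_U (m : Fin N → ℝ) :
    ContinuousOn (U m : Conf d N → ℝ) {x | ¬ collision x} := by
  unfold U
  refine continuousOn_finsetSum _ fun i _ => continuousOn_finsetSum _ fun j _ => ?_
  split_ifs with hij
  · refine ContinuousOn.div continuousOn_const (by fun_prop) fun x hx => ?_
    exact norm_ne_zero_iff.2 (sub_ne_zero.2 fun h => hx ⟨i, j, hij.ne, h⟩)
  · exact continuousOn_const

/-- The renormalized potential is integrable along collision-free curves at bounded distance from
the linear motion. -/
lemma integrableOn_U_sub_U {m : Fin N → ℝ} (hm : ∀ i, 0 < m i) {a : Conf d N}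
    (ha : ¬ collision a) {γ : ℝ → Conf d N} (hγ : ContinuousOn γ (Ici 1))
    (hc : ∀ t, 1 ≤ t → ¬ collision (γ t)) {D : ℝ} (hD : ∀ t, 1 ≤ t → ‖γ t - t • a‖ ≤ D) :
    IntegrableOn (fun t => U m (γ t) - U m (t • a)) (Ioi 1) := by
  obtain ⟨r, hr, har⟩ := exists_separation ha
  have hD0 : 0 ≤ D := (norm_nonneg _).trans (hD 1 le_rfl)
  have hP := pairMass_nonneg hm
  have hsepa : ∀ t, 1 ≤ t → ∀ i j, i ≠ j → t * r ≤ ‖(t • a) i - (t • a) j‖ := by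
    intro t ht i j hij
    rw [Pi.smul_apply, Pi.smul_apply, ← smul_sub, norm_smul, Real.norm_of_nonneg (by linarith)]
    gcongr
    exact har i j hij
  have hca : ∀ t : ℝ, 1 ≤ t → ¬ collision (t • a) := fun t ht =>
    not_collision_of_separated (mul_pos (by linarith) hr) (hsepa t ht)
  have hcont : ContinuousOn (fun t => U m (γ t) - U m (t • a)) (Ici 1) :=
    ((continuousOn_U m).comp hγ fun t ht => hc t ht).sub
      ((continuousOn_U m).comp (by fun_prop) fun t ht => hca t ht)
  set T := max 1 (4 * D / r) with hT
  have hT1 : 1 ≤ T := le_max_left _ _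
  have hTr : ∀ t, T ≤ t → 4 * D ≤ t * r := fun t ht =>
    (div_le_iff₀ hr).1 ((le_max_right _ _).trans ht)
  have hbd : ∀ t ∈ Ioi T,
      ‖U m (γ t) - U m (t • a)‖ ≤ pairMass m * (8 * D / r ^ 2) * t ^ (-2 : ℝ) := by
    intro t ht
    have hTt : T < t := ht
    have ht1 : 1 ≤ t := by linarith
    have ht0 : 0 < t := by linarith
    have hsepγ : ∀ i j, i ≠ j → t * r / 2 ≤ ‖γ t i - γ t j‖ := by
      intro i j hij
      have h1 := norm_pair_sub_le (γ t) (t • a) i j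
      have h2 := norm_sub_norm_le ((t • a) i - (t • a) j) (γ t i - γ t j)
      rw [norm_sub_rev ((t • a) i - (t • a) j)] at h2
      linarith [hsepa t ht1 i j hij, hTr t hTt.le, hD t ht1]
    have hsepa' : ∀ i j, i ≠ j → t * r / 2 ≤ ‖(t • a) i - (t • a) j‖ := fun i j hij =>
      (half_le_self (by positivity)).trans (hsepa t ht1 i j hij)
    have hr' : 0 < t * r / 2 := by positivity
    have h1 := U_sub_U_le_of_separated hm hr' hsepγ (hca t ht1)
    have h2 := U_sub_U_le_of_separated hm hr' hsepa' (hc t ht1)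
    rw [norm_sub_rev] at h2
    have h3 : pairMass m * (2 * ‖γ t - t • a‖ / (t * r / 2) ^ 2) ≤
        pairMass m * (8 * D / r ^ 2) * t ^ (-2 : ℝ) := by
      calc _ ≤ pairMass m * (2 * D / (t * r / 2) ^ 2) := by
            gcongr
            exact hD t ht1
        _ = _ := by
            rw [Real.rpow_neg ht0.le, Real.rpow_two]
            field_simp
            ring
    rw [Real.norm_eq_abs, abs_le]
    constructor <;> linarith
  have hI1 : IntegrableOn (fun t => U m (γ t) - U m (t • a)) (Icc 1 T) :=
    (hcont.mono Icc_subset_Ici_self).integrableOn_Icc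
  have hI2 : IntegrableOn (fun t => U m (γ t) - U m (t • a)) (Ioi T) := by
    refine Integrable.mono' ((integrableOn_Ioi_rpow_of_lt (by norm_num : (-2 : ℝ) < -1)
      (by linarith : 0 < T)).const_mul (pairMass m * (8 * D / r ^ 2))) ?_ ?_
    · refine (hcont.mono fun t ht => ?_).aestronglyMeasurable measurableSet_Ioi
      exact hT1.trans (le_of_lt ht)
    · filter_upwards [ae_restrict_mem measurableSet_Ioi] with t ht using hbd t ht
  refine (hI1.union hI2).mono_set fun t ht => ?_
  rcases le_or_gt t T with h | h
  · exact Or.inl ⟨le_of_lt ht, h⟩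
  · exact Or.inr h

lemma hypInf_ne_top (hd : 2 ≤ d) (hN : 2 ≤ N) {m : Fin N → ℝ} (hm : ∀ i, 0 < m i)
    {a x : Conf d N} (ha : ¬ collision a) (hx : ¬ collision x) : hypInf m a x ⊤ ≠ ⊤ := by
  obtain ⟨v, hv, hc⟩ := exists_collision_free_ramp (a := a) hd hN hm hx
  obtain ⟨hD, -⟩ := (InD.zero m).add_ramp hm hv one_pos
  have hcont : ContinuousOn
      (hypCurve a x (fun t => (0 : ℝ → Conf d N) t + ramp 1 t • v)) (Ici 1) := by
    unfold hypCurve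
    exact ((hD.continuousOn.add (by fun_prop)).add continuousOn_const).sub continuousOn_const
  have hi := (integrableOn_hypIntegrand_iff hD).2
    (integrableOn_U_sub_U hm ha hcont hc (D := ‖v‖ + ‖x - a‖) fun t ht => by
      have h1 : hypCurve a x (fun t => (0 : ℝ → Conf d N) t + ramp 1 t • v) t - t • a =
          ramp 1 t • v + (x - a) := by
        simp only [hypCurve, Pi.zero_apply]
        abel
      rw [h1]
      refine (norm_add_le _ _).trans ?_
      gcongr
      rw [norm_smul, Real.norm_of_nonneg (ramp_nonneg one_pos ht)]
      exact mul_le_of_le_one_left (norm_nonneg _) (ramp_le_one one_pos t))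
  refine ne_top_of_le_ne_top (EReal.coe_ne_top _) (hypInf_le_coe hD hi ?_ le_rfl)
  filter_upwards [ae_restrict_mem measurableSet_Ioi] with t ht using hc t (le_of_lt ht)

lemma hypInf_ne_bot {m : Fin N → ℝ} (hm : ∀ i, 0 < m i) {a : Conf d N} (ha : ¬ collision a)
    (x : Conf d N) : hypInf m a x ⊤ ≠ ⊥ := by
  obtain ⟨C, -, hcoer⟩ := exists_action_coercive hm ha
  refine ne_bot_of_le_ne_bot (EReal.coe_ne_bot (-(C * (1 + ‖x - a‖)))) ?_
  refine le_iInf fun φ => le_iInf fun φ' => le_iInf fun hD => ?_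
  unfold hypAction
  rw [timeSet_top]
  split_ifs with hc
  · rw [EReal.coe_le_coe_iff]
    have h1 := hcoer x φ φ' hD hc.1 hc.2
    have h2 : 0 ≤ ∫ t in Ioi 1, mnorm m (φ' t) ^ 2 := integral_nonneg fun t => sq_nonneg _
    linarith
  · exact le_top

/-- **Continuity of the minimal renormalized action** : the function
`w_∞(x) = inf_{φ ∈ D₀^{1,2}(1,+∞)} A_x(φ)` is real-valued (finite) on `Ω` and continuous
on `Ω`. -/
theorem w_infty_continuous {d N : ℕ} (hd : 2 ≤ d) (hN : 2 ≤ N)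
    (m : Fin N → ℝ) (hm : ∀ i, 0 < m i)
    (a : Conf d N) (ha : inOmega m a) :
    (∀ x : Conf d N, inOmega m x → hypInf m a x ⊤ ≠ ⊤ ∧ hypInf m a x ⊤ ≠ ⊥) ∧
    ContinuousOn (fun x : Conf d N => (hypInf m a x ⊤).toReal) {x | inOmega m x} := by
  have hfin : ∀ x : Conf d N, inOmega m x → hypInf m a x ⊤ ≠ ⊤ ∧ hypInf m a x ⊤ ≠ ⊥ :=
    fun x hx => ⟨hypInf_ne_top hd hN hm ha.2 hx.2, hypInf_ne_bot hm ha.2 x⟩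
  refine ⟨hfin, fun x hx => ?_⟩
  set w : Conf d N → ℝ := fun y => (hypInf m a y ⊤).toReal with hw
  have hcoe : ∀ y, inOmega m y → hypInf m a y ⊤ = (w y : EReal) := fun y hy =>
    (EReal.coe_toReal (hfin y hy).1 (hfin y hy).2).symm
  refine Metric.continuousWithinAt_iff.2 fun ε hε => ?_
  obtain ⟨η, hη, hle⟩ := exists_nhds_hypInf_le hm ha.2 hx.2 (w x + ε + 1)
    (ε := ε / 2) (half_pos hε)
  have hw_le : ∀ y z, inOmega m y → inOmega m z → ‖y - x‖ < η → ‖z - x‖ < η →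
      w y ≤ w x + ε / 2 → w z ≤ w y + ε / 2 := by
    intro y z hy hz hyx hzx hyw
    refine le_of_forall_gt_imp_ge_of_dense fun c hc => ?_
    have h1 : w y < min (c - ε / 2) (w x + ε + 1) := lt_min (by linarith) (by linarith)
    have h2 := hle y z hy.1 hz.1 hyx hzx _ (min_le_right _ _)
      (by rw [hcoe y hy]; exact EReal.coe_lt_coe_iff.2 h1)
    rw [hcoe z hz, EReal.coe_le_coe_iff] at h2
    linarith [min_le_left (c - ε / 2) (w x + ε + 1)]
  refine ⟨η, hη, fun y hy hyx => ?_⟩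
  rw [dist_eq_norm] at hyx
  have hxx : ‖x - x‖ < η := by simpa using hη
  have h1 := hw_le x y hx hy hxx hyx (by linarith)
  have h2 := hw_le y x hy hx hyx hxx h1
  rw [Real.dist_eq, abs_lt]
  constructor <;> linarith

end NBodyHJ
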